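/- The infinite series ∑_{n=1}^{∞} 1/((2n−1)(4n−3)) converges to (π + 2·ln 2)/4. -/

import Mathlib

/-!
With `n` starting at `0`, the general term is `1/((2n+1)(4n+1)) = 2/(4n+1) - 2/(4n+2)`, which splits as
`(1/(4n+1) - 1/(4n+3)) + (1/(4n+1) + 1/(4n+3) - 1/(2n+1))`. The first bracket groups two consecutive
terms of the Leibniz series for `π/4`. The second sums to a combination of harmonic numbers,
`H(4N) - 3/2 H(2N) + 1/2 H(N)` (`partial_sum_eq`). Since `H(m) - log m → γ` and the coefficients
`1, -3/2, 1/2` add up to zero, that combination tends to `log 4 - 3/2 log 2 = (log 2)/2`.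
-/

open Real

open Filter Topology

theorem partial_sum_eq (N : ℕ) :
    ∑ n ∈ Finset.range N, 1 / ((2*((n:ℝ)+1)-1) * (4*((n:ℝ)+1)-3)) =
      (∑ i ∈ Finset.range (2 * N), (-1 : ℝ) ^ i / (2 * i + 1)) +
        ((harmonic (4 * N) : ℝ) - 3 / 2 * (harmonic (2 * N) : ℝ) + 1 / 2 * (harmonic N : ℝ)) := by
  induction N with
  | zero => simp
  | succ N ih =>
    rw [Finset.sum_range_succ, ih, show 2 * (N + 1) = 2 * N + 1 + 1 by ring,
      show 4 * (N + 1) = 4 * N + 1 + 1 + 1 + 1 by ring]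
    simp only [Finset.sum_range_succ, harmonic_succ]
    have hpow : (-1 : ℝ) ^ (2 * N) = 1 := by simp [pow_mul]
    rw [pow_succ, hpow]
    push_cast
    have h1 : (2*((N:ℝ)+1)-1) = 2 * N + 1 := by ring
    have h2 : (4*((N:ℝ)+1)-3) = 4 * N + 1 := by ring
    have h3 : (2 * (2 * (N:ℝ)) + 1) = 4 * N + 1 := by ring
    have h4 : (2 * (2 * (N:ℝ) + 1) + 1) = 4 * N + 3 := by ring
    have h5 : (4 * (N:ℝ) + 1 + 1) = 2 * (2 * N + 1) := by ring
    have h6 : (2 * (N:ℝ) + 1 + 1) = 2 * (N + 1) := by ring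
    have h7 : (4 * (N:ℝ) + 2 + 1) = 4 * N + 3 := by ring
    have h8 : (4 * (N:ℝ) + 3 + 1) = 4 * (N + 1) := by ring
    rw [h1, h2, h3, h4, h5, h6, h7, h8]
    field_simp
    ring

theorem tendsto_harmonic_combination :
    Tendsto (fun N : ℕ => (harmonic (4 * N) : ℝ) - 3 / 2 * (harmonic (2 * N) : ℝ)
      + 1 / 2 * (harmonic N : ℝ)) atTop (𝓝 (Real.log 2 / 2)) := by
  have h := Real.tendsto_harmonic_sub_log
  have h2 := h.comp (tendsto_id.const_mul_atTop' (r := 2) (by norm_num))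
  have h4 := h.comp (tendsto_id.const_mul_atTop' (r := 4) (by norm_num))
  have key := ((h4.sub (h2.const_mul (3 / 2))).add (h.const_mul (1 / 2))).add_const (Real.log 2 / 2)
  have hlim : Real.eulerMascheroniConstant - 3 / 2 * Real.eulerMascheroniConstant
      + 1 / 2 * Real.eulerMascheroniConstant + Real.log 2 / 2 = Real.log 2 / 2 := by ring
  rw [hlim] at key
  refine key.congr' ?_
  filter_upwards [eventually_gt_atTop 0] with N hN
  have hN' : (N : ℝ) ≠ 0 := by positivity
  have hlog4 : Real.log 4 = 2 * Real.log 2 := by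
    rw [show (4 : ℝ) = 2 ^ 2 by norm_num, Real.log_pow]; norm_num
  simp only [Function.comp_apply, id]
  push_cast
  rw [Real.log_mul (by norm_num) hN', Real.log_mul (by norm_num) hN', hlog4]
  ring

theorem stmt_5 :
    HasSum (fun n : ℕ => 1 / ((2*((n:ℝ)+1)-1) * (4*((n:ℝ)+1)-3))) ((π + 2 * Real.log 2) / 4) := by
  rw [hasSum_iff_tendsto_nat_of_nonneg]
  · have hpi := Real.tendsto_sum_pi_div_four.comp
      (tendsto_id.const_mul_atTop' (r := 2) (by norm_num))
    have key := hpi.add tendsto_harmonic_combination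
    rw [show (π + 2 * Real.log 2) / 4 = π / 4 + Real.log 2 / 2 by ring]
    exact key.congr fun N => (partial_sum_eq N).symm
  · intro n
    have hn : (0 : ℝ) ≤ n := n.cast_nonneg
    exact one_div_nonneg.2 (mul_nonneg (by linarith) (by linarith))
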